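/- For every m ∈ ℕ^n, every x ∈ S_C(m) and every index 1 ≤ i ≤ n with m_i ≥ 1, there exists y ∈ S_C(e_i), where e_i ∈ ℕ^n is the i-th standard unit vector, such that y ≤ x componentwise and x − y ∈ S_C(m − e_i). (This is the type-C case of the paper's decomposition Proposition and its Corollary.) -/

import Mathlib

open Finset
open scoped Pointwise

/-- The `i`-th standard unit vector (1-based coordinates, as a function `ℕ → ℕ`). -/
def unitVec (i : ℕ) : ℕ → ℕ := fun l => if l = i then 1 else 0

/-- The lattice-point set `S_C(m)` of the polytope `P_w(λ)` in type `C_n`, where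
`w = s_1 ⋯ s_{n-1} s_n s_{n-1} ⋯ s_1` and `λ = m_1 ω_1 + ⋯ + m_n ω_n`.
A point is a 1-based tuple `c_1, …, c_{2n-1}` of nonnegative integers (all other
coordinates vanish), subject to the Dyck-path inequalities (C1)–(C2), the degree-path
inequalities (C3) and the inequalities (C4) from paths with coefficients. -/
def SC (n : ℕ) (m : ℕ → ℕ) : Set (ℕ → ℕ) :=
  {c | (∀ l, (l = 0 ∨ 2 * n - 1 < l) → c l = 0) ∧
    (∀ j, 1 ≤ j → j < n →
      ∑ l ∈ Icc 1 j, c l ≤ ∑ l ∈ Icc 1 j, m l) ∧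
    ((∑ l ∈ Icc 1 (n - 1), c l) + c (2 * n - 1) ≤ ∑ l ∈ Icc 1 n, m l) ∧
    (∀ j, 2 ≤ j → j ≤ n →
      (∑ l ∈ Icc 1 (2 * n - j), c l) + c (2 * n - 1) ≤
        (∑ l ∈ Icc 1 (j - 1), m l) + 2 * ∑ l ∈ Icc j n, m l) ∧
    (∀ j k, 2 ≤ j → j ≤ n → j - 1 ≤ k → k < n →
      2 * (∑ l ∈ Icc 1 k, c l) + (∑ l ∈ Icc (k + 1) (2 * n - j), c l) + 2 * c (2 * n - 1) ≤
        (∑ l ∈ Icc 1 (j - 1), m l) + 2 * (∑ l ∈ Icc j n, m l) + ∑ l ∈ Icc 1 k, m l)}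

/-!
In terms of the prefix sums of `x` and of `m`, all inequalities defining `SC n m` become linear
conditions on pairs of prefix sums (`PrefixBounds`). To split `x ∈ SC n (m + e_i)`, try the
greedy `y ≤ x`, which takes the first unit of `x` in the positions `i, …, 2n-1-i` and then
fills up to two units in the positions up to `2n-2`. The greedy choice can fail only if some
tight inequality (C2) or (C4) involves a prefix of `x` that the greedy `y` does not meet
(`IsObstructed`). Comparing the other inequalities with this tight one shows that those in the
way of `y = e_{2n-1}` are strict, so that this `y` can be used instead.
-/

/-! ### Prefix sums -/

/-- The partial sum `c_1 + ⋯ + c_k` of a 1-based tuple; `c 0` is ignored. -/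
def prefixSum (c : ℕ → ℕ) (k : ℕ) : ℕ := ∑ l ∈ Icc 1 k, c l

theorem prefixSum_zero (c : ℕ → ℕ) : prefixSum c 0 = 0 := rfl

theorem prefixSum_succ (c : ℕ → ℕ) (k : ℕ) :
    prefixSum c (k + 1) = prefixSum c k + c (k + 1) :=
  sum_Icc_succ_top (by omega) c

theorem prefixSum_mono (c : ℕ → ℕ) : Monotone (prefixSum c) :=
  monotone_nat_of_le_succ fun k => prefixSum_succ c k ▸ Nat.le_add_right _ _

theorem prefixSum_add (c d : ℕ → ℕ) : prefixSum (c + d) = prefixSum c + prefixSum d :=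
  funext fun _ => sum_add_distrib

theorem prefixSum_add_sum_Icc (c : ℕ → ℕ) {a b : ℕ} (hab : a ≤ b) :
    prefixSum c a + ∑ l ∈ Icc (a + 1) b, c l = prefixSum c b := by
  induction b, hab using Nat.le_induction with
  | base => simp
  | succ b hb ih => rw [prefixSum_succ, ← ih, sum_Icc_succ_top (by omega), add_assoc]

theorem prefixSum_unitVec {i : ℕ} (hi : 1 ≤ i) (k : ℕ) :
    prefixSum (unitVec i) k = if i ≤ k then 1 else 0 := by
  simp [prefixSum, unitVec, hi]

theorem prefixSum_unitVec_of_lt {i k : ℕ} (hk : k < i) : prefixSum (unitVec i) k = 0 := by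
  rw [prefixSum_unitVec (by omega), if_neg (by omega)]

theorem prefixSum_unitVec_of_le {i k : ℕ} (hi : 1 ≤ i) (hk : i ≤ k) :
    prefixSum (unitVec i) k = 1 := by
  rw [prefixSum_unitVec hi, if_pos hk]

theorem unitVec_le_iff {i : ℕ} {c : ℕ → ℕ} : unitVec i ≤ c ↔ 1 ≤ c i := by
  refine ⟨fun h => by simpa [unitVec] using h i, fun h l => ?_⟩
  by_cases hl : l = i
  · simpa [unitVec, hl] using h
  · simp [unitVec, hl]

theorem exists_le_prefixSum_eq (x : ℕ → ℕ) {Y R : ℕ → ℕ} (hY : Monotone Y) (hR : Monotone R)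
    (hYR : prefixSum x = Y + R) (N : ℕ) :
    ∃ y ≤ x, (∀ k < N, prefixSum y k = Y k) ∧ ∀ l, N ≤ l → y l = 0 := by
  have hx (k : ℕ) : prefixSum x k = Y k + R k := congrFun hYR k
  refine ⟨fun l => if l < N then Y l - Y (l - 1) else 0, fun l => ?_, fun k hk => ?_,
    fun l hl => if_neg (by omega)⟩
  · rcases l with _ | l
    · simp
    · have hstep := prefixSum_succ x l
      have := hR l.le_succ
      simp only [hx, Nat.add_sub_cancel, Nat.succ_eq_add_one] at hstep this ⊢
      split_ifs <;> omega
  · induction k with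
    | zero =>
      have := hx 0
      rw [prefixSum_zero] at this ⊢
      omega
    | succ k ih =>
      rw [prefixSum_succ, ih (by omega), if_pos hk, Nat.add_sub_cancel]
      exact Nat.add_sub_cancel' (hY k.le_succ)

/-- The inequalities (C1)–(C4) for a tuple with prefix sums `X` and last coordinate `z`, and a
weight with prefix sums `M`. The index `p` stands for `j - 1`, and (C2) is the case `p = n` of
`degree`. -/
structure PrefixBounds (n : ℕ) (M X : ℕ → ℕ) (z : ℕ) : Prop where
  dyck : ∀ k < n, X k ≤ M k
  degree : ∀ p, 1 ≤ p → p ≤ n → X (2 * n - 1 - p) + z + M p ≤ 2 * M n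
  coeff : ∀ p k, 1 ≤ p → p ≤ k → k < n →
    X k + X (2 * n - 1 - p) + 2 * z + M p ≤ 2 * M n + M k

theorem mem_SC_iff {n : ℕ} (hn : 1 ≤ n) {m c : ℕ → ℕ} :
    c ∈ SC n m ↔ (∀ l, (l = 0 ∨ 2 * n - 1 < l) → c l = 0) ∧
      PrefixBounds n (prefixSum m) (prefixSum c) (c (2 * n - 1)) := by
  have sum_eq (c : ℕ → ℕ) (k : ℕ) : ∑ l ∈ Icc 1 k, c l = prefixSum c k := rfl
  have index_eq (p : ℕ) : 2 * n - (p + 1) = 2 * n - 1 - p := by omega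
  have middle_eq : 2 * n - 1 - n = n - 1 := by omega
  have degree_iff (p : ℕ) (hp : p < n) :
      prefixSum c (2 * n - (p + 1)) + c (2 * n - 1) ≤
        prefixSum m (p + 1 - 1) + 2 * ∑ l ∈ Icc (p + 1) n, m l ↔
      prefixSum c (2 * n - 1 - p) + c (2 * n - 1) + prefixSum m p ≤ 2 * prefixSum m n := by
    have := prefixSum_add_sum_Icc m hp.le
    rw [index_eq, Nat.add_sub_cancel]
    omega
  have coeff_iff (p k : ℕ) (hp : p < n) (hk : k < n) :
      2 * prefixSum c k + ∑ l ∈ Icc (k + 1) (2 * n - (p + 1)), c l + 2 * c (2 * n - 1) ≤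
        prefixSum m (p + 1 - 1) + 2 * ∑ l ∈ Icc (p + 1) n, m l + prefixSum m k ↔
      prefixSum c k + prefixSum c (2 * n - 1 - p) + 2 * c (2 * n - 1) + prefixSum m p ≤
        2 * prefixSum m n + prefixSum m k := by
    have := prefixSum_add_sum_Icc m hp.le
    have := prefixSum_add_sum_Icc c (show k ≤ 2 * n - 1 - p by omega)
    rw [index_eq, Nat.add_sub_cancel]
    omega
  simp only [SC, Set.mem_ofPred_eq, sum_eq]
  refine and_congr_right fun _ => ⟨fun ⟨h1, h2, h3, h4⟩ => ⟨fun k hk => ?_, fun p hp hpn => ?_,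
    fun p k hp hpk hk => ?_⟩, fun h => ⟨fun j _ => h.dyck j, ?_, ?_, ?_⟩⟩
  · rcases k.eq_zero_or_pos with rfl | hk0
    · rfl
    · exact h1 k hk0 hk
  · rcases hpn.eq_or_lt with rfl | hpn
    · rw [middle_eq]
      omega
    · exact (degree_iff p hpn).1 (h3 (p + 1) (by omega) hpn)
  · exact (coeff_iff p k (by omega) hk).1 (h4 (p + 1) k (by omega) (by omega) hpk hk)
  · have := h.degree n hn le_rfl
    rw [middle_eq] at this
    omega
  · rintro (_ | p) hp hpn
    · omega
    · exact (degree_iff p hpn).2 (h.degree p (by omega) (by omega))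
  · rintro (_ | p) k hp hpn hpk hk
    · omega
    · exact (coeff_iff p k hpn hk).2 (h.coeff p k (by omega) hpk hk)

theorem PrefixBounds.congr {n z : ℕ} {M X X' : ℕ → ℕ} (h : PrefixBounds n M X z)
    (hX : ∀ k < 2 * n - 1, X' k = X k) : PrefixBounds n M X' z where
  dyck k hk := hX k (by omega) ▸ h.dyck k hk
  degree p hp hpn := hX (2 * n - 1 - p) (by omega) ▸ h.degree p hp hpn
  coeff p k hp hpk hk :=
    hX k (by omega) ▸ hX (2 * n - 1 - p) (by omega) ▸ h.coeff p k hp hpk hk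

/-! ### The greedy element -/

section Greedy

variable {n i : ℕ} {X : ℕ → ℕ}

/-- Prefix sums of the greedy element below a tuple with prefix sums `X`: as large as possible
with no unit before position `i`, at most one up to position `2 * n - 1 - i`, and at most two in
total. -/
def greedyPrefix (n i : ℕ) (X : ℕ → ℕ) (k : ℕ) : ℕ :=
  min 2 (min (1 + (X k - X (min k (2 * n - 1 - i)))) (X k - X (min k (i - 1))))

theorem greedyPrefix_of_lt {k : ℕ} (hk : k < i) : greedyPrefix n i X k = 0 := by
  simp [greedyPrefix, show min k (i - 1) = k by omega]

theorem greedyPrefix_of_mid {k : ℕ} (hik : i - 1 ≤ k) (hk : k ≤ 2 * n - 1 - i) :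
    greedyPrefix n i X k = min 1 (X k - X (i - 1)) := by
  rw [greedyPrefix, min_eq_left hk, min_eq_right hik]
  omega

theorem greedyPrefix_of_ge {k : ℕ} (hi : i ≤ n) (hk : 2 * n - 1 - i ≤ k) :
    greedyPrefix n i X k = min 2 (min (1 + (X k - X (2 * n - 1 - i))) (X k - X (i - 1))) := by
  rw [greedyPrefix, min_eq_right hk, min_eq_right (show i - 1 ≤ k by omega)]

theorem greedyPrefix_le (n i : ℕ) (X : ℕ → ℕ) : greedyPrefix n i X ≤ X := fun _ =>
  (min_le_right _ _).trans ((min_le_right _ _).trans (Nat.sub_le _ _))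

theorem greedyPrefix_mono (hX : Monotone X) : Monotone (greedyPrefix n i X) := by
  have sub_mono (a : ℕ) : Monotone fun k => X k - X (min k a) := fun k l hkl => by
    have := hX hkl
    rcases le_total k a with hka | hka
    · simp [min_eq_left hka]
    · simp only [min_eq_right hka, min_eq_right (hka.trans hkl)]
      omega
  exact monotone_const.min (((sub_mono _).const_add 1).min (sub_mono _))

theorem sub_greedyPrefix_mono (hX : Monotone X) : Monotone (X - greedyPrefix n i X) := by
  have sub_eq : X - greedyPrefix n i X =
      fun k => max (X k - 2) (max (X (min k (2 * n - 1 - i)) - 1) (X (min k (i - 1)))) := by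
    funext k
    have := hX (min_le_left k (2 * n - 1 - i))
    have := hX (min_le_left k (i - 1))
    simp only [Pi.sub_apply, greedyPrefix]
    omega
  have min_mono (a : ℕ) : Monotone fun k => X (min k a) :=
    hX.comp (monotone_id.min monotone_const)
  have tsub_mono (a : ℕ) : Monotone fun k : ℕ => k - a := fun _ _ h => Nat.sub_le_sub_right h a
  rw [sub_eq]
  exact ((tsub_mono 2).comp hX).max (((tsub_mono 1).comp (min_mono _)).max (min_mono _))

theorem prefixBounds_greedyPrefix (hi : 1 ≤ i) (hin : i ≤ n) (X : ℕ → ℕ) :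
    PrefixBounds n (prefixSum (unitVec i)) (greedyPrefix n i X) 0 := by
  have total : prefixSum (unitVec i) n = 1 := prefixSum_unitVec_of_le hi hin
  have dyck (k : ℕ) (hk : k < n) :
      greedyPrefix n i X k ≤ prefixSum (unitVec i) k := by
    rcases lt_or_ge k i with hki | hki
    · simp [greedyPrefix_of_lt hki]
    · rw [greedyPrefix_of_mid (by omega) (by omega), prefixSum_unitVec_of_le hi hki]
      omega
  have degree (p : ℕ) (hpn : p ≤ n) :
      greedyPrefix n i X (2 * n - 1 - p) + prefixSum (unitVec i) p ≤ 2 := by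
    rcases lt_or_ge p i with hpi | hpi
    · rw [prefixSum_unitVec_of_lt hpi]
      exact min_le_left _ _
    · rw [greedyPrefix_of_mid (by omega) (by omega), prefixSum_unitVec_of_le hi hpi]
      omega
  refine ⟨dyck, fun p _ hpn => ?_, fun p k _ hpk hk => ?_⟩
  · have := degree p hpn
    omega
  · have := degree p (by omega)
    have := dyck k hk
    omega

end Greedy

/-! ### Obstructions and the last unit vector -/

theorem prefixBounds_zero_one {n i : ℕ} (hi : 1 ≤ i) (hin : i ≤ n) :
    PrefixBounds n (prefixSum (unitVec i)) 0 1 := by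
  have total : prefixSum (unitVec i) n = 1 := prefixSum_unitVec_of_le hi hin
  refine ⟨fun _ _ => Nat.zero_le _, fun p _ hpn => ?_, fun p k _ hpk _ => ?_⟩
  · have := prefixSum_mono (unitVec i) hpn
    simp only [Pi.zero_apply]
    omega
  · have := prefixSum_mono (unitVec i) hpk
    simp only [Pi.zero_apply]
    omega

/-- The obstruction to removing the greedy element: a tight inequality (C4) in which the prefix sum
up to `k` has no contribution from positions `≥ i`, so that it is not lowered. The value `k = n`
also covers (C2): there the prefix sum stops at `n - 1`, and the equality says that (C2) and
`PrefixBounds.degree` for `p` are both tight. -/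
def IsObstructed (n i : ℕ) (M X : ℕ → ℕ) (z : ℕ) : Prop :=
  ∃ p k, i ≤ p ∧ p ≤ k ∧ k ≤ n ∧ X (min k (n - 1)) = X (i - 1) ∧
    X (i - 1) + X (2 * n - 1 - p) + 2 * z + M p = 2 * M n + M k

namespace PrefixBounds

variable {n i z : ℕ} {M X : ℕ → ℕ}

theorem le_add_of_isObstructed (h : PrefixBounds n M X z) (hM : Monotone M) (hi : 1 ≤ i)
    (hobs : IsObstructed n i M X z) : M i ≤ X (i - 1) + z := by
  obtain ⟨p, k, hip, hpk, hkn, -, htight⟩ := hobs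
  have := h.degree p (by omega) (by omega)
  have := hM (hip.trans hpk)
  omega

theorem add_le_add_of_isObstructed (h : PrefixBounds n M X z) (hM : Monotone M) (hX : Monotone X)
    (hi : 1 ≤ i) (hobs : IsObstructed n i M X z) {l : ℕ} (hil : i ≤ l) (hl : l < n) :
    X l + M i ≤ X (i - 1) + M l := by
  obtain ⟨p, k, hip, hpk, hkn, hXk, htight⟩ := hobs
  rcases le_or_gt l k with hlk | hkl
  · have := hX (show l ≤ min k (n - 1) by omega)
    have := hM hil
    omega
  · have := h.coeff p l (by omega) (by omega) hl
    have := hM (hip.trans hpk)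
    omega

theorem middle (h : PrefixBounds n M X z) (hn : 1 ≤ n) : X (n - 1) + z ≤ M n := by
  have := h.degree n hn le_rfl
  rw [show 2 * n - 1 - n = n - 1 by omega] at this
  omega

theorem add_lt_of_not_isObstructed (h : PrefixBounds n M X z) (hX : Monotone X) (hi : 1 ≤ i)
    (hin : i ≤ n) (hobs : ¬ IsObstructed n i M X z) : X (i - 1) + z < M n := by
  have := h.middle (by omega)
  have := hX (show i - 1 ≤ n - 1 by omega)
  by_contra! hle
  refine hobs ⟨n, n, hin, le_rfl, le_rfl, ?_, ?_⟩
  · rw [min_eq_right (Nat.sub_le n 1)]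
    omega
  · rw [show 2 * n - 1 - n = n - 1 by omega]
    omega

theorem coeff_lt_of_not_isObstructed (h : PrefixBounds n M X z) (hi : 1 ≤ i)
    (hobs : ¬ IsObstructed n i M X z) {p k : ℕ} (hip : i ≤ p) (hpk : p ≤ k) (hk : k < n)
    (hXk : X k = X (i - 1)) :
    X k + X (2 * n - 1 - p) + 2 * z + M p < 2 * M n + M k := by
  refine (h.coeff p k (by omega) hpk hk).lt_of_ne fun htight => hobs ⟨p, k, hip, hpk, hk.le, ?_, ?_⟩
  · rwa [min_eq_left (by omega)]
  · rwa [← hXk]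

theorem dyck_pred (h : PrefixBounds n (M + prefixSum (unitVec i)) X z) (hi : 1 ≤ i) (hin : i ≤ n) :
    X (i - 1) ≤ M (i - 1) := by
  have := h.dyck (i - 1) (by omega)
  rwa [Pi.add_apply, prefixSum_unitVec_of_lt (by omega), add_zero] at this

theorem coeff_pred (h : PrefixBounds n (M + prefixSum (unitVec i)) X z) (hin : i ≤ n) {p : ℕ}
    (hp : 1 ≤ p) (hpi : p < i) :
    X (i - 1) + X (2 * n - 1 - p) + 2 * z + M p ≤ 2 * M n + 2 + M (i - 1) := by
  have := h.coeff p (i - 1) hp (by omega) (by omega)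
  simp only [Pi.add_apply, prefixSum_unitVec_of_le (by omega) hin, prefixSum_unitVec_of_lt hpi,
    prefixSum_unitVec_of_lt (show i - 1 < i by omega)] at this
  omega

theorem one_le_of_isObstructed (h : PrefixBounds n (M + prefixSum (unitVec i)) X z)
    (hM : Monotone M) (hi : 1 ≤ i) (hin : i ≤ n)
    (hobs : IsObstructed n i (M + prefixSum (unitVec i)) X z) : 1 ≤ z := by
  have hz := h.le_add_of_isObstructed (hM.add (prefixSum_mono _)) hi hobs
  have := hM (Nat.sub_le i 1)
  have := h.dyck_pred hi hin
  rw [Pi.add_apply, prefixSum_unitVec_of_le hi le_rfl] at hz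
  omega

theorem sub_last (h : PrefixBounds n (M + prefixSum (unitVec i)) X z)
    (hM : Monotone M) (hX : Monotone X) (hi : 1 ≤ i) (hin : i ≤ n)
    (hobs : IsObstructed n i (M + prefixSum (unitVec i)) X z) : PrefixBounds n M X (z - 1) := by
  have hMz : M i + 1 ≤ X (i - 1) + z := by
    have := h.le_add_of_isObstructed (hM.add (prefixSum_mono _)) hi hobs
    rwa [Pi.add_apply, prefixSum_unitVec_of_le hi le_rfl] at this
  have growth {l : ℕ} (hil : i ≤ l) (hl : l < n) : X l + M i ≤ X (i - 1) + M l := by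
    have := h.add_le_add_of_isObstructed (hM.add (prefixSum_mono _)) hX hi hobs hil hl
    simp only [Pi.add_apply, prefixSum_unitVec_of_le hi le_rfl,
      prefixSum_unitVec_of_le hi hil] at this
    omega
  have hXi := h.dyck_pred hi hin
  have hMi := hM (Nat.sub_le i 1)
  have total := prefixSum_unitVec_of_le hi hin
  refine ⟨fun k hk => ?_, fun p hp hpn => ?_, fun p k hp hpk hk => ?_⟩
  · rcases lt_or_ge k i with hki | hik
    · simpa [prefixSum_unitVec_of_lt hki] using h.dyck k hk
    · have := growth hik hk
      omega
  · rcases lt_or_ge p i with hpi | hip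
    · have := h.coeff_pred hin hp hpi
      omega
    · have := h.degree p hp hpn
      simp only [Pi.add_apply, total, prefixSum_unitVec_of_le hi hip] at this
      omega
  · have hcoeff := h.coeff p k hp hpk hk
    simp only [Pi.add_apply, total] at hcoeff
    rcases lt_or_ge p i with hpi | hip
    · rcases lt_or_ge k i with hki | hik
      · rw [prefixSum_unitVec_of_lt hki] at hcoeff
        omega
      · have := h.coeff_pred hin hp hpi
        have := growth hik hk
        omega
    · rw [prefixSum_unitVec_of_le hi hip, prefixSum_unitVec_of_le hi (hip.trans hpk)] at hcoeff
      omega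

/-! ### Removing the greedy element -/

theorem dyck_sub_greedyPrefix (h : PrefixBounds n (M + prefixSum (unitVec i)) X z)
    (hM : Monotone M) (hi : 1 ≤ i) (hin : i ≤ n) {k : ℕ} (hk : k < n) :
    (X - greedyPrefix n i X) k ≤ M k := by
  have hdyck := h.dyck k hk
  rcases lt_or_ge k i with hki | hik
  · simpa [prefixSum_unitVec_of_lt hki, greedyPrefix_of_lt hki] using hdyck
  · rw [Pi.sub_apply, greedyPrefix_of_mid (by omega) (by omega)]
    rw [Pi.add_apply, prefixSum_unitVec_of_le hi hik] at hdyck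
    have := h.dyck_pred hi hin
    have := hM (show i - 1 ≤ k by omega)
    omega

theorem coeff_sub_greedyPrefix_left_of_lt (h : PrefixBounds n (M + prefixSum (unitVec i)) X z)
    (hM : Monotone M) (hi : 1 ≤ i) (hin : i ≤ n) {p k : ℕ} (hp : 1 ≤ p) (hpi : p < i) (hpk : p ≤ k)
    (hk : k < n) :
    (X - greedyPrefix n i X) k + X (2 * n - 1 - p) + 2 * z + M p ≤ 2 * M n + 2 + M k := by
  have hcoeff := h.coeff p k hp hpk hk
  simp only [Pi.add_apply, prefixSum_unitVec_of_le hi hin, prefixSum_unitVec_of_lt hpi] at hcoeff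
  rcases lt_or_ge k i with hki | hik
  · rw [prefixSum_unitVec_of_lt hki] at hcoeff
    rw [Pi.sub_apply, greedyPrefix_of_lt hki]
    omega
  · rw [prefixSum_unitVec_of_le hi hik] at hcoeff
    have := h.coeff_pred hin hp hpi
    have := hM (show i - 1 ≤ k by omega)
    rw [Pi.sub_apply, greedyPrefix_of_mid (by omega) (by omega)]
    omega

theorem pred_add_le_of_not_isObstructed (h : PrefixBounds n (M + prefixSum (unitVec i)) X z)
    (hX : Monotone X) (hi : 1 ≤ i) (hin : i ≤ n)
    (hobs : ¬ IsObstructed n i (M + prefixSum (unitVec i)) X z) : X (i - 1) + z ≤ M n := by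
  have := h.add_lt_of_not_isObstructed hX hi hin hobs
  rw [Pi.add_apply, prefixSum_unitVec_of_le hi hin] at this
  omega

theorem degree_sub_greedyPrefix (h : PrefixBounds n (M + prefixSum (unitVec i)) X z)
    (hM : Monotone M) (hX : Monotone X) (hi : 1 ≤ i) (hin : i ≤ n)
    (hobs : ¬ IsObstructed n i (M + prefixSum (unitVec i)) X z) {p : ℕ} (hp : 1 ≤ p)
    (hpn : p ≤ n) : (X - greedyPrefix n i X) (2 * n - 1 - p) + z + M p ≤ 2 * M n := by
  have hdegree := h.degree p hp hpn
  have := h.pred_add_le_of_not_isObstructed hX hi hin hobs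
  have := hM hpn
  simp only [Pi.add_apply, prefixSum_unitVec_of_le hi hin] at hdegree
  rcases lt_or_ge p i with hpi | hip
  · have hdegree_i := h.degree i hi hin
    simp only [Pi.add_apply, prefixSum_unitVec_of_le hi hin,
      prefixSum_unitVec_of_le hi le_rfl] at hdegree_i
    rw [prefixSum_unitVec_of_lt hpi] at hdegree
    have := hM hpi.le
    rw [Pi.sub_apply, greedyPrefix_of_ge hin (by omega)]
    omega
  · rw [prefixSum_unitVec_of_le hi hip] at hdegree
    rw [Pi.sub_apply, greedyPrefix_of_mid (by omega) (by omega)]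
    omega

theorem coeff_sub_greedyPrefix_left_of_le (h : PrefixBounds n (M + prefixSum (unitVec i)) X z)
    (hX : Monotone X) (hi : 1 ≤ i) (hin : i ≤ n)
    (hobs : ¬ IsObstructed n i (M + prefixSum (unitVec i)) X z) {p k : ℕ} (hip : i ≤ p)
    (hpk : p ≤ k) (hk : k < n) :
    (X - greedyPrefix n i X) k + X (2 * n - 1 - p) + 2 * z + M p ≤ 2 * M n + 1 + M k := by
  have hcoeff := h.coeff p k (by omega) hpk hk
  have hlt := h.coeff_lt_of_not_isObstructed hi hobs hip hpk hk
  simp only [Pi.add_apply, prefixSum_unitVec_of_le hi hin, prefixSum_unitVec_of_le hi hip,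
    prefixSum_unitVec_of_le hi (hip.trans hpk)] at hcoeff hlt
  have := hX (show i - 1 ≤ k by omega)
  rw [Pi.sub_apply, greedyPrefix_of_mid (by omega) (by omega)]
  omega

theorem sub_greedyPrefix_add_le (h : PrefixBounds n (M + prefixSum (unitVec i)) X z)
    (hX : Monotone X) (hi : 1 ≤ i) (hin : i ≤ n)
    (hobs : ¬ IsObstructed n i (M + prefixSum (unitVec i)) X z) {k : ℕ} (hk : k < n) :
    (X - greedyPrefix n i X) k + z ≤ M n := by
  have := h.pred_add_le_of_not_isObstructed hX hi hin hobs
  rcases lt_or_ge k i with hki | hik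
  · have := hX (show k ≤ i - 1 by omega)
    rw [Pi.sub_apply, greedyPrefix_of_lt hki]
    omega
  · have hmiddle := h.middle (by omega)
    rw [Pi.add_apply, prefixSum_unitVec_of_le hi hin] at hmiddle
    have := hX (show k ≤ n - 1 by omega)
    rw [Pi.sub_apply, greedyPrefix_of_mid (by omega) (by omega)]
    omega

theorem coeff_sub_greedyPrefix_left_mid (h : PrefixBounds n (M + prefixSum (unitVec i)) X z)
    (hM : Monotone M) (hX : Monotone X) (hi : 1 ≤ i) (hin : i ≤ n)
    (hobs : ¬ IsObstructed n i (M + prefixSum (unitVec i)) X z) {p k : ℕ} (hpi : p < i)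
    (hpk : p ≤ k) (hk : k < n) :
    (X - greedyPrefix n i X) k + X (2 * n - 1 - i) + 2 * z + M p ≤ 2 * M n + 1 + M k := by
  have := hM hpk
  rcases hin.eq_or_lt with rfl | hin'
  · have := h.pred_add_le_of_not_isObstructed hX hi hin hobs
    have := h.sub_greedyPrefix_add_le hX hi hin hobs hk
    rw [show 2 * i - 1 - i = i - 1 by omega]
    omega
  rcases lt_or_ge k i with hki | hik
  · have := h.coeff_sub_greedyPrefix_left_of_le hX hi hin hobs le_rfl le_rfl hin'
    have := sub_greedyPrefix_mono (n := n) (i := i) hX hki.le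
    omega
  · have := h.coeff_sub_greedyPrefix_left_of_le hX hi hin hobs le_rfl hik hk
    have := hM hpi.le
    omega

theorem coeff_sub_greedyPrefix (h : PrefixBounds n (M + prefixSum (unitVec i)) X z)
    (hM : Monotone M) (hX : Monotone X) (hi : 1 ≤ i) (hin : i ≤ n)
    (hobs : ¬ IsObstructed n i (M + prefixSum (unitVec i)) X z) {p k : ℕ} (hp : 1 ≤ p)
    (hpk : p ≤ k) (hk : k < n) :
    (X - greedyPrefix n i X) k + (X - greedyPrefix n i X) (2 * n - 1 - p) + 2 * z + M p ≤
      2 * M n + M k := by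
  have := h.pred_add_le_of_not_isObstructed hX hi hin hobs
  have := h.sub_greedyPrefix_add_le hX hi hin hobs hk
  have := hM hpk
  rw [Pi.sub_apply _ _ (2 * n - 1 - p)]
  rcases lt_or_ge p i with hpi | hip
  · have := h.coeff_sub_greedyPrefix_left_of_lt hM hi hin hp hpi hpk hk
    have := h.coeff_sub_greedyPrefix_left_mid hM hX hi hin hobs hpi hpk hk
    rw [greedyPrefix_of_ge hin (by omega)]
    omega
  · have := h.coeff_sub_greedyPrefix_left_of_le hX hi hin hobs hip hpk hk
    rw [greedyPrefix_of_mid (by omega) (by omega)]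
    omega

theorem sub_greedyPrefix (h : PrefixBounds n (M + prefixSum (unitVec i)) X z)
    (hM : Monotone M) (hX : Monotone X) (hi : 1 ≤ i) (hin : i ≤ n)
    (hobs : ¬ IsObstructed n i (M + prefixSum (unitVec i)) X z) :
    PrefixBounds n M (X - greedyPrefix n i X) z where
  dyck _ := h.dyck_sub_greedyPrefix hM hi hin
  degree _ := h.degree_sub_greedyPrefix hM hX hi hin hobs
  coeff _ _ := h.coeff_sub_greedyPrefix hM hX hi hin hobs

end PrefixBounds

theorem mem_SC_add_SC {n : ℕ} (hn : 1 ≤ n) {m₁ m₂ x y Y : ℕ → ℕ}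
    (hx : ∀ l, (l = 0 ∨ 2 * n - 1 < l) → x l = 0) (hyx : y ≤ x)
    (hY : ∀ k < 2 * n - 1, prefixSum y k = Y k)
    (h₁ : PrefixBounds n (prefixSum m₁) Y (y (2 * n - 1)))
    (h₂ : PrefixBounds n (prefixSum m₂) (prefixSum x - Y) (x (2 * n - 1) - y (2 * n - 1))) :
    x ∈ SC n m₁ + SC n m₂ := by
  obtain ⟨r, rfl⟩ := exists_add_of_le hyx
  have hsupp (l : ℕ) (hl : l = 0 ∨ 2 * n - 1 < l) : y l = 0 ∧ r l = 0 :=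
    add_eq_zero.mp (hx l hl)
  rw [Pi.add_apply, Nat.add_sub_cancel_left] at h₂
  refine Set.add_mem_add ((mem_SC_iff hn).2 ⟨fun l hl => (hsupp l hl).1, h₁.congr hY⟩)
    ((mem_SC_iff hn).2 ⟨fun l hl => (hsupp l hl).2, h₂.congr fun k hk => ?_⟩)
  rw [prefixSum_add, Pi.sub_apply, Pi.add_apply, hY k hk, Nat.add_sub_cancel_left]

theorem SC_add_unitVec_subset {n i : ℕ} (hi : 1 ≤ i) (hin : i ≤ n) (m : ℕ → ℕ) :
    SC n (m + unitVec i) ⊆ SC n (unitVec i) + SC n m := by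
  intro x hx
  have hn : 1 ≤ n := hi.trans hin
  rw [mem_SC_iff hn, prefixSum_add] at hx
  obtain ⟨hsupp, h⟩ := hx
  have hM := prefixSum_mono m
  have hX := prefixSum_mono x
  by_cases hobs :
      IsObstructed n i (prefixSum m + prefixSum (unitVec i)) (prefixSum x) (x (2 * n - 1))
  · have hlast : unitVec (2 * n - 1) (2 * n - 1) = 1 := if_pos rfl
    refine mem_SC_add_SC hn hsupp (y := unitVec (2 * n - 1)) (Y := 0)
      (unitVec_le_iff.2 (h.one_le_of_isObstructed hM hi hin hobs))
      (fun k hk => prefixSum_unitVec_of_lt hk) ?_ ?_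
    · rw [hlast]
      exact prefixBounds_zero_one hi hin
    · rw [hlast, tsub_zero]
      exact h.sub_last hM hX hi hin hobs
  · obtain ⟨y, hyx, hY, hy⟩ := exists_le_prefixSum_eq x (greedyPrefix_mono hX)
      (sub_greedyPrefix_mono hX) (add_tsub_cancel_of_le (greedyPrefix_le n i _)).symm (2 * n - 1)
    refine mem_SC_add_SC hn hsupp hyx hY ?_ ?_
    · rw [hy _ le_rfl]
      exact prefixBounds_greedyPrefix hi hin _
    · rw [hy _ le_rfl, tsub_zero]
      exact h.sub_greedyPrefix hM hX hi hin hobs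

/-- Decomposition property in type `C`: any point of `S_C(m)` with `m_i ≥ 1` can be reduced
by a point of `S_C(e_i)` to a point of `S_C(m - e_i)`. -/
theorem SC_decomposition (n : ℕ) (hn : 2 ≤ n) (m : ℕ → ℕ) (i : ℕ) (hi1 : 1 ≤ i) (hin : i ≤ n)
    (hmi : 1 ≤ m i) (x : ℕ → ℕ) (hx : x ∈ SC n m) :
    ∃ y ∈ SC n (unitVec i), y ≤ x ∧ x - y ∈ SC n (m - unitVec i) := by
  rw [← tsub_add_cancel_of_le (unitVec_le_iff.2 hmi)] at hx
  obtain ⟨y, hy, r, hr, rfl⟩ := SC_add_unitVec_subset hi1 hin _ hx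
  exact ⟨y, hy, le_self_add, by rwa [add_tsub_cancel_left]⟩
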